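/- Let n ≥ 1 be an integer, let α ∈ (0,1) and s ∈ (0,1), and let Ω ⊂ ℝ^{n+1} be an open convex set whose boundary has finite n-dimensional Hausdorff measure, |∂Ω| < ∞. Then there exists a constant C > 0, depending only on n, α, and s, such that |∂Ω|^{(n−s)/n} ≤ C · ∫_{∂Ω} H_α(x)^{s/α} dx. -/

import Mathlib

open MeasureTheory Set Filter Metric
open scoped ENNReal NNReal

/-- The truncated integral defining the fractional `α`-mean curvature of `Ω` at `x`. -/
noncomputable def fracMCIntegral (n : ℕ) (α : ℝ) (Ω : Set (EuclideanSpace ℝ (Fin (n+1))))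
    (x : EuclideanSpace ℝ (Fin (n+1))) (ε : ℝ) : ℝ :=
  (α/2) * ∫ y in {y : EuclideanSpace ℝ (Fin (n+1)) | ε < dist y x},
      ((Ωᶜ.indicator (fun _ => (1:ℝ)) y) - (Ω.indicator (fun _ => (1:ℝ)) y))
        * (dist y x) ^ (-((n:ℝ)+1+α)) ∂volume

/-- `h` is the fractional `α`-mean curvature of `Ω` at `x` (principal value limit). -/
def IsFracMeanCurv (n : ℕ) (α : ℝ) (Ω : Set (EuclideanSpace ℝ (Fin (n+1))))
    (x : EuclideanSpace ℝ (Fin (n+1))) (h : ℝ) : Prop :=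
  Filter.Tendsto (fracMCIntegral n α Ω x) (nhdsWithin 0 (Set.Ioi 0)) (nhds h)

/-!
The curvature satisfies the pointwise bound `H_α ≥ c |∂Ω|^(-α/n)`, which is then raised to the
power `s / α` and integrated over `∂Ω`.

Convexity makes `Ω` disjoint from its reflection `σ Ω` in a point `x ∈ ∂Ω`, so in the principal
value the contribution of `Ω` cancels that of `σ Ω` and `H_α(x)` is `α / 2` times the integral of
`|y - x|^(-(n+1+α))` over the complement of `Ω ∪ σ Ω`. Projecting along an outward normal at `x`
gives `|Ω ∩ B(x, R)| ≤ R |∂Ω|`. Hence, if `ω` is the volume of the unit ball and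
`ω R^n = 4 |∂Ω|`, at least half of `B(x, R)` lies in that complement, and the kernel is at least
`R^(-(n+1+α))` there.
-/

open scoped RealInnerProductSpace

section Reflection

lemma setIntegral_indicator_compl_sub_indicator_mul {X : Type*} [MeasurableSpace X]
    {μ : Measure X} {Ω S : Set X} {σ : X → X} {k : X → ℝ} (hΩ : MeasurableSet Ω)
    (hσ : MeasurePreserving σ μ μ) (hσe : MeasurableEmbedding σ) (hdisj : Disjoint Ω (σ ⁻¹' Ω))
    (hS : σ ⁻¹' S = S) (hk : ∀ y, k (σ y) = k y) (hint : IntegrableOn k S μ) :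
    ∫ y in S, (Ωᶜ.indicator (fun _ => (1 : ℝ)) y - Ω.indicator (fun _ => (1 : ℝ)) y) * k y ∂μ =
      ∫ y in S \ (Ω ∪ σ ⁻¹' Ω), k y ∂μ := by
  have hreflect : ∫ y in S ∩ Ω, k y ∂μ = ∫ y in S ∩ σ ⁻¹' Ω, k y ∂μ := by
    rw [← hσ.setIntegral_preimage_emb hσe k (S ∩ Ω), preimage_inter, hS]
    simp only [hk]
  have hinter : (S \ Ω) ∩ σ ⁻¹' Ω = S ∩ σ ⁻¹' Ω := by
    rw [sdiff_eq, inter_assoc, inter_eq_right.2 hdisj.subset_compl_left]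
  have hsplit := integral_inter_add_sdiff (hσe.measurable hΩ)
    (hint.mono_set (sdiff_subset (s := S) (t := Ω)))
  rw [hinter, sdiff_sdiff] at hsplit
  calc ∫ y in S, (Ωᶜ.indicator (fun _ => (1 : ℝ)) y - Ω.indicator (fun _ => (1 : ℝ)) y) * k y ∂μ
      = ∫ y in S, (Ωᶜ.indicator k y - Ω.indicator k y) ∂μ := by
        simp only [sub_mul, ← indicator_mul_left, one_mul]
    _ = ∫ y in S \ Ω, k y ∂μ - ∫ y in S ∩ Ω, k y ∂μ := by
        rw [integral_sub (hint.indicator hΩ.compl) (hint.indicator hΩ),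
          setIntegral_indicator hΩ.compl, setIntegral_indicator hΩ, sdiff_eq]
    _ = ∫ y in S \ (Ω ∪ σ ⁻¹' Ω), k y ∂μ := by
        rw [hreflect, ← hsplit, add_sub_cancel_left]

lemma disjoint_preimage_pointReflection {E : Type*} [AddCommGroup E] [Module ℝ E] {Ω : Set E}
    (hc : Convex ℝ Ω) {x : E} (hx : x ∉ Ω) :
    Disjoint Ω (Equiv.pointReflection x ⁻¹' Ω) := by
  refine disjoint_left.2 fun y hy hy' => hx ?_
  have hmid := hc.midpoint_mem hy hy'
  rwa [(midpoint_eq_iff' ℝ).2 rfl] at hmid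

variable {E : Type*} [NormedAddCommGroup E] [MeasurableSpace E] [BorelSpace E]

lemma measurableEmbedding_pointReflection (x : E) :
    MeasurableEmbedding (Equiv.pointReflection x) :=
  (Homeomorph.pointReflection x).measurableEmbedding

variable [NormedSpace ℝ E] [FiniteDimensional ℝ E] (μ : Measure E) [μ.IsAddHaarMeasure]

lemma measurePreserving_pointReflection (x : E) :
    MeasurePreserving (Equiv.pointReflection x) μ μ :=
  (measurePreserving_add_right μ x).comp (μ.measurePreserving_sub_left x)

lemma measureReal_closedBall_le_reflection_compl_add (Ω : Set E) (x : E) (ε R : ℝ) :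
    μ.real (closedBall x R) ≤
      μ.real (closedBall x R ∩ ({y | ε < dist y x} \ (Ω ∪ Equiv.pointReflection x ⁻¹' Ω))) +
        μ.real (closedBall x ε) + 2 * μ.real (Ω ∩ closedBall x R) := by
  set σ := Equiv.pointReflection x
  set T := closedBall x R ∩ ({y | ε < dist y x} \ (Ω ∪ σ ⁻¹' Ω))
  set B := Ω ∩ closedBall x R
  have hσB : μ (σ ⁻¹' B) = μ B := (measurePreserving_pointReflection μ x).measure_preimage_emb
    (measurableEmbedding_pointReflection x) B
  have hT : μ T ≠ ⊤ := measure_ne_top_of_subset inter_subset_left measure_closedBall_lt_top.ne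
  have hB : μ B ≠ ⊤ := measure_ne_top_of_subset inter_subset_right measure_closedBall_lt_top.ne
  have hcover : closedBall x R ⊆ T ∪ closedBall x ε ∪ (B ∪ σ ⁻¹' B) := by
    intro y hy
    have hσy : σ y ∈ closedBall x R := by
      simpa only [σ, mem_closedBall, dist_pointReflection_left, dist_comm x] using hy
    by_cases hyε : ε < dist y x
    · grind
    · exact .inl (.inr (not_lt.1 hyε))
  have hfinite : μ (T ∪ closedBall x ε ∪ (B ∪ σ ⁻¹' B)) ≠ ⊤ :=
    measure_union_ne_top (measure_union_ne_top hT measure_closedBall_lt_top.ne)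
      (measure_union_ne_top hB (hσB ▸ hB))
  calc μ.real (closedBall x R)
      ≤ μ.real (T ∪ closedBall x ε ∪ (B ∪ σ ⁻¹' B)) := measureReal_mono hcover hfinite
    _ ≤ μ.real T + μ.real (closedBall x ε) + (μ.real B + μ.real (σ ⁻¹' B)) := by
        grw [measureReal_union_le, measureReal_union_le, measureReal_union_le B]
    _ = μ.real T + μ.real (closedBall x ε) + 2 * μ.real B := by
        rw [measureReal_def μ (σ ⁻¹' B), hσB, two_mul, measureReal_def μ B]

end Reflection

section Kernel

variable {E : Type*} [NormedAddCommGroup E] [NormedSpace ℝ E] [FiniteDimensional ℝ E]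
  [MeasurableSpace E] [BorelSpace E] (μ : Measure E) [μ.IsAddHaarMeasure]

lemma integrableOn_dist_rpow_neg (x : E) {p ε : ℝ} (hp : (Module.finrank ℝ E : ℝ) < p)
    (hε : 0 < ε) : IntegrableOn (fun y => dist y x ^ (-p)) {y | ε < dist y x} μ := by
  have hp0 : -p ≤ 0 := neg_nonpos.2 ((Nat.cast_nonneg _).trans hp.le)
  have hmajorant : Integrable (fun y => (1 + ‖y - x‖) ^ (-p) / (1 + ε⁻¹) ^ (-p)) μ :=
    ((integrable_one_add_norm hp).comp_sub_right x).div_const _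
  refine hmajorant.integrableOn.mono' (by fun_prop : Measurable _).aestronglyMeasurable ?_
  filter_upwards [ae_restrict_mem (measurableSet_lt measurable_const (by fun_prop))] with y hy
  have hd : 0 < dist y x := hε.trans hy
  rw [Real.norm_of_nonneg (by positivity), ← dist_eq_norm,
    ← Real.div_rpow (by positivity) (by positivity)]
  refine Real.rpow_le_rpow_of_nonpos (by positivity) ?_ hp0
  have : 1 ≤ dist y x * ε⁻¹ := (one_le_div hε).2 hy.le
  rw [div_le_iff₀ (by positivity)]
  linarith

lemma rpow_neg_mul_measureReal_le_setIntegral {Ω : Set E} {x : E} (hΩ : MeasurableSet Ω)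
    (hdisj : Disjoint Ω (Equiv.pointReflection x ⁻¹' Ω)) {p ε R : ℝ}
    (hp : (Module.finrank ℝ E : ℝ) < p) (hε : 0 < ε) (hR : 0 ≤ R) :
    R ^ (-p) * (μ.real (closedBall x R) - μ.real (closedBall x ε)
        - 2 * μ.real (Ω ∩ closedBall x R)) ≤
      ∫ y in {y | ε < dist y x},
        (Ωᶜ.indicator (fun _ => (1 : ℝ)) y - Ω.indicator (fun _ => (1 : ℝ)) y)
          * dist y x ^ (-p) ∂μ := by
  set S : Set E := {y | ε < dist y x}
  set σ := Equiv.pointReflection x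
  set U := S \ (Ω ∪ σ ⁻¹' Ω)
  have hdist (y : E) : dist (σ y) x = dist y x := by
    rw [dist_pointReflection_left, dist_comm]
  have hσS : σ ⁻¹' S = S := by
    ext y
    simp only [S, mem_preimage, mem_ofPred_eq, hdist]
  have hσ := measurableEmbedding_pointReflection x
  have hS : MeasurableSet S := measurableSet_lt measurable_const (by fun_prop)
  have hU : MeasurableSet U := hS.diff (hΩ.union (hσ.measurable hΩ))
  have hint : IntegrableOn (fun y => dist y x ^ (-p)) S μ := integrableOn_dist_rpow_neg μ x hp hε
  have hintU := hint.mono_set (sdiff_subset : U ⊆ S)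
  have hkernel : ∀ y ∈ closedBall x R ∩ U, R ^ (-p) ≤ dist y x ^ (-p) := fun y hy =>
    Real.rpow_le_rpow_of_nonpos (hε.trans hy.2.1) hy.1
      (neg_nonpos.2 ((Nat.cast_nonneg _).trans hp.le))
  calc R ^ (-p) * (μ.real (closedBall x R) - μ.real (closedBall x ε)
        - 2 * μ.real (Ω ∩ closedBall x R))
      ≤ R ^ (-p) * μ.real (closedBall x R ∩ U) := by
        gcongr
        linarith [measureReal_closedBall_le_reflection_compl_add μ Ω x ε R]
    _ ≤ ∫ y in closedBall x R ∩ U, dist y x ^ (-p) ∂μ :=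
        setIntegral_ge_of_const_le_real (measurableSet_closedBall.inter hU)
          (measure_ne_top_of_subset inter_subset_left measure_closedBall_lt_top.ne) hkernel
          (hintU.mono_set inter_subset_right)
    _ ≤ ∫ y in U, dist y x ^ (-p) ∂μ :=
        setIntegral_mono_set hintU (.of_forall fun y => by positivity)
          inter_subset_right.eventuallyLE
    _ = _ := (setIntegral_indicator_compl_sub_indicator_mul hΩ
        (measurePreserving_pointReflection μ x) hσ hdisj hσS (fun y => by rw [hdist]) hint).symm

end Kernel

section Projection

lemma exists_add_smul_mem_frontier {E : Type*} [AddCommGroup E] [TopologicalSpace E]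
    [ContinuousAdd E] [Module ℝ E] [ContinuousSMul ℝ E] {Ω : Set E} {y v : E} (hy : y ∈ Ω)
    {t : ℝ} (ht : y + t • v ∉ Ω) : ∃ r : ℝ, y + r • v ∈ frontier Ω := by
  set line : ℝ → E := fun r => y + r • v
  have hne : (frontier (line ⁻¹' Ω)).Nonempty :=
    nonempty_frontier_iff.2 ⟨⟨0, by simpa [line] using hy⟩, fun h => ht (h ▸ mem_univ t :)⟩
  exact hne.imp (Continuous.frontier_preimage_subset (by fun_prop) Ω)

variable {E : Type*} [NormedAddCommGroup E] [InnerProductSpace ℝ E]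

lemma exists_norm_eq_one_forall_inner_lt [CompleteSpace E] {Ω : Set E} (ho : IsOpen Ω)
    (hc : Convex ℝ Ω) (hne : Ω.Nonempty) {x : E} (hx : x ∉ Ω) :
    ∃ ν : E, ‖ν‖ = 1 ∧ ∀ y ∈ Ω, ⟪ν, y⟫ < ⟪ν, x⟫ := by
  obtain ⟨f, hf⟩ := geometric_hahn_banach_open_point hc ho hx
  set v := (InnerProductSpace.toDual ℝ E).symm f
  have hv : ∀ y ∈ Ω, ⟪v, y⟫ < ⟪v, x⟫ := by simpa [v] using hf
  have hv0 : v ≠ 0 := by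
    intro h
    obtain ⟨y, hy⟩ := hne
    simpa [h] using hv y hy
  refine ⟨‖v‖⁻¹ • v, norm_smul_inv_norm hv0, fun y hy => ?_⟩
  rw [real_inner_smul_left, real_inner_smul_left]
  have := norm_pos_iff.2 hv0
  gcongr
  exact hv y hy

variable [FiniteDimensional ℝ E] [MeasurableSpace E] [BorelSpace E] {n : ℕ}

lemma exists_measurePreserving_inner_prod (hE : Module.finrank ℝ E = n + 1) {ν : E}
    (hν : ‖ν‖ = 1) :
    ∃ π : E →L[ℝ] (Fin n → ℝ), ‖π‖ ≤ 1 ∧ π ν = 0 ∧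
      MeasurePreserving (fun y => (⟪ν, y⟫, π y)) := by
  have hν' : Orthonormal ℝ (({0} : Set (Fin (n + 1))).domRestrict fun _ => ν) :=
    ⟨fun _ => hν, fun i j hij => (hij (Subsingleton.elim i j)).elim⟩
  obtain ⟨b, hb⟩ := hν'.exists_orthonormalBasis_extension_of_card_eq (by simpa using hE)
  obtain rfl : b 0 = ν := hb 0 rfl
  refine ⟨.pi fun i => innerSL ℝ (b i.succ), ?_, ?_, ?_⟩
  · refine ContinuousLinearMap.opNorm_le_bound _ zero_le_one fun y => ?_
    rw [pi_norm_le_iff_of_nonneg (by positivity)]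
    intro i
    simpa using norm_inner_le_norm (𝕜 := ℝ) (b i.succ) y
  · ext i
    simp [b.inner_eq_ite]
  · have hcoord : (fun y => (⟪b 0, y⟫, ContinuousLinearMap.pi (fun i => innerSL ℝ (b i.succ)) y)) =
        MeasurableEquiv.piFinSuccAbove (fun _ => ℝ) 0 ∘ WithLp.ofLp ∘ b.repr := by
      funext y
      exact Prod.ext (b.repr_apply_apply y 0).symm
        (funext fun i => (b.repr_apply_apply y i.succ).symm)
    rw [hcoord]
    exact (volume_preserving_piFinSuccAbove (fun _ => ℝ) 0).comp
      ((PiLp.volume_preserving_ofLp (Fin (n + 1))).comp b.measurePreserving_repr)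

lemma volume_inter_slab_le (hE : Module.finrank ℝ E = n + 1) {Ω : Set E} {ν : E} (hν : ‖ν‖ = 1)
    (hexit : ∀ y ∈ Ω, ∃ t : ℝ, y + t • ν ∉ Ω) (I : Set ℝ) :
    volume (Ω ∩ {y | ⟪ν, y⟫ ∈ I}) ≤ volume I * μH[(n : ℝ)] (frontier Ω) := by
  obtain ⟨π, hπ, hπν, hmp⟩ := exists_measurePreserving_inner_prod hE hν
  have hsub : Ω ∩ {y | ⟪ν, y⟫ ∈ I} ⊆ (fun y => (⟪ν, y⟫, π y)) ⁻¹' (I ×ˢ (π '' frontier Ω)) := by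
    rintro y ⟨hy, hyI⟩
    obtain ⟨t, ht⟩ := hexit y hy
    obtain ⟨r, hr⟩ := exists_add_smul_mem_frontier hy ht
    exact ⟨hyI, y + r • ν, hr, by simp [hπν]⟩
  have hshadow : volume (π '' frontier Ω) ≤ μH[(n : ℝ)] (frontier Ω) := by
    have hlip : LipschitzWith 1 π := π.lipschitz.weaken hπ
    simpa [← hausdorffMeasure_pi_real] using
      hlip.hausdorffMeasure_image_le n.cast_nonneg (frontier Ω)
  calc volume (Ω ∩ {y | ⟪ν, y⟫ ∈ I})
      ≤ volume ((fun y => (⟪ν, y⟫, π y)) ⁻¹' (I ×ˢ (π '' frontier Ω))) := measure_mono hsub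
    _ ≤ volume (I ×ˢ (π '' frontier Ω)) := by
        conv_rhs => rw [← hmp.map_eq]
        exact Measure.le_map_apply hmp.aemeasurable _
    _ = volume I * volume (π '' frontier Ω) := by rw [Measure.volume_eq_prod, Measure.prod_prod]
    _ ≤ volume I * μH[(n : ℝ)] (frontier Ω) := by gcongr

lemma volume_inter_closedBall_le (hE : Module.finrank ℝ E = n + 1) {Ω : Set E} (ho : IsOpen Ω)
    (hc : Convex ℝ Ω) {x : E} (hx : x ∉ Ω) (R : ℝ) :
    volume (Ω ∩ closedBall x R) ≤ ENNReal.ofReal R * μH[(n : ℝ)] (frontier Ω) := by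
  obtain rfl | hne := Ω.eq_empty_or_nonempty
  · simp
  obtain ⟨ν, hν, hlt⟩ := exists_norm_eq_one_forall_inner_lt ho hc hne hx
  have hexit : ∀ y ∈ Ω, ∃ t : ℝ, y + t • ν ∉ Ω := by
    refine fun y _ => ⟨⟪ν, x⟫ - ⟪ν, y⟫, fun hy => (hlt _ hy).ne ?_⟩
    rw [inner_add_right, real_inner_smul_right, real_inner_self_eq_norm_sq, hν]
    ring
  have hslab : Ω ∩ closedBall x R ⊆ Ω ∩ {y | ⟪ν, y⟫ ∈ Icc (⟪ν, x⟫ - R) ⟪ν, x⟫} := by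
    rintro y ⟨hy, hyR⟩
    refine ⟨hy, ?_, (hlt y hy).le⟩
    have := real_inner_le_norm ν (x - y)
    rw [hν, one_mul, inner_sub_right, ← dist_eq_norm'] at this
    linarith [mem_closedBall.1 hyR]
  calc volume (Ω ∩ closedBall x R)
      ≤ volume (Ω ∩ {y | ⟪ν, y⟫ ∈ Icc (⟪ν, x⟫ - R) ⟪ν, x⟫}) := measure_mono hslab
    _ ≤ volume (Icc (⟪ν, x⟫ - R) ⟪ν, x⟫) * μH[(n : ℝ)] (frontier Ω) :=
        volume_inter_slab_le hE hν hexit _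
    _ = ENNReal.ofReal R * μH[(n : ℝ)] (frontier Ω) := by rw [Real.volume_Icc, sub_sub_cancel]

end Projection

section Curvature

variable {n : ℕ} {α : ℝ} {Ω : Set (EuclideanSpace ℝ (Fin (n + 1)))}
  {x : EuclideanSpace ℝ (Fin (n + 1))} {h : ℝ}

lemma le_fracMCIntegral (hα : 0 < α) (ho : IsOpen Ω) (hc : Convex ℝ Ω)
    (hfin : μH[(n : ℝ)] (frontier Ω) ≠ ⊤) (hx : x ∉ Ω) {ε R : ℝ} (hε : 0 < ε) (hR : 0 ≤ R) :
    α / 2 * (R ^ (-(n + 1 + α)) *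
        ((R ^ (n + 1) - ε ^ (n + 1)) * volume.real (ball (0 : EuclideanSpace ℝ (Fin (n + 1))) 1)
          - 2 * (R * μH[(n : ℝ)].real (frontier Ω)))) ≤
      fracMCIntegral n α Ω x ε := by
  have hball (r : ℝ) (hr : 0 ≤ r) : volume.real (closedBall x r) =
      r ^ (n + 1) * volume.real (ball (0 : EuclideanSpace ℝ (Fin (n + 1))) 1) := by
    rw [Measure.addHaar_real_closedBall _ x hr, finrank_euclideanSpace_fin]
  have hvol : volume.real (Ω ∩ closedBall x R) ≤ R * μH[(n : ℝ)].real (frontier Ω) := by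
    simpa [measureReal_def, hR] using ENNReal.toReal_mono (by finiteness)
      (volume_inter_closedBall_le finrank_euclideanSpace_fin ho hc hx R)
  have hintegral := rpow_neg_mul_measureReal_le_setIntegral volume ho.measurableSet
    (disjoint_preimage_pointReflection hc hx) (p := n + 1 + α) (by simpa using hα) hε hR
  rw [hball R hR, hball ε hε.le, ← sub_mul] at hintegral
  unfold fracMCIntegral
  grw [← hintegral, hvol]

lemma IsFracMeanCurv.le (hα : 0 < α) (ho : IsOpen Ω) (hc : Convex ℝ Ω)
    (hfin : μH[(n : ℝ)] (frontier Ω) ≠ ⊤) (hx : x ∉ Ω) (hh : IsFracMeanCurv n α Ω x h) {R : ℝ}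
    (hR : 0 ≤ R) :
    α / 2 * (R ^ (-(n + 1 + α)) *
        (R ^ (n + 1) * volume.real (ball (0 : EuclideanSpace ℝ (Fin (n + 1))) 1)
          - 2 * (R * μH[(n : ℝ)].real (frontier Ω)))) ≤ h := by
  set ω := volume.real (ball (0 : EuclideanSpace ℝ (Fin (n + 1))) 1)
  set P := μH[(n : ℝ)].real (frontier Ω)
  have hlim : Tendsto (fun ε : ℝ => α / 2 * (R ^ (-(n + 1 + α)) *
      ((R ^ (n + 1) - ε ^ (n + 1)) * ω - 2 * (R * P)))) (nhdsWithin 0 (Ioi 0))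
      (nhds (α / 2 * (R ^ (-(n + 1 + α)) * ((R ^ (n + 1) - 0 ^ (n + 1)) * ω - 2 * (R * P))))) :=
    (Continuous.tendsto (by fun_prop) 0).mono_left nhdsWithin_le_nhds
  rw [zero_pow n.succ_ne_zero, sub_zero] at hlim
  refine le_of_tendsto_of_tendsto hlim hh ?_
  filter_upwards [self_mem_nhdsWithin] with ε hε
  exact le_fracMCIntegral hα ho hc hfin hx hε hR

/-- The constant `c` in the pointwise bound `c |∂Ω|^(-α/n) ≤ H_α`, obtained from the radius `R` with
`ω R^n = 4 |∂Ω|`, where `ω` is the volume of the unit ball of `ℝ^(n+1)`. -/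
noncomputable def fracMeanCurvConst (n : ℕ) (α : ℝ) : ℝ :=
  α / 4 * volume.real (ball (0 : EuclideanSpace ℝ (Fin (n + 1))) 1) *
    (4 / volume.real (ball (0 : EuclideanSpace ℝ (Fin (n + 1))) 1)) ^ (-(α / n))

lemma fracMeanCurvConst_pos (n : ℕ) (hα : 0 < α) : 0 < fracMeanCurvConst n α := by
  have : 0 < volume.real (ball (0 : EuclideanSpace ℝ (Fin (n + 1))) 1) :=
    ENNReal.toReal_pos (measure_ball_pos _ _ one_pos).ne' measure_ball_lt_top.ne
  unfold fracMeanCurvConst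
  positivity

lemma IsFracMeanCurv.const_mul_rpow_le (hn : n ≠ 0) (hα : 0 < α) (ho : IsOpen Ω)
    (hc : Convex ℝ Ω) (hpos : μH[(n : ℝ)] (frontier Ω) ≠ 0)
    (hfin : μH[(n : ℝ)] (frontier Ω) ≠ ⊤) (hx : x ∉ Ω) (hh : IsFracMeanCurv n α Ω x h) :
    fracMeanCurvConst n α * μH[(n : ℝ)].real (frontier Ω) ^ (-(α / n)) ≤ h := by
  set P := μH[(n : ℝ)].real (frontier Ω)
  set ω := volume.real (ball (0 : EuclideanSpace ℝ (Fin (n + 1))) 1) with hω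
  have hP : 0 < P := ENNReal.toReal_pos hpos hfin
  have hω0 : 0 < ω := ENNReal.toReal_pos (measure_ball_pos _ _ one_pos).ne' measure_ball_lt_top.ne
  set R : ℝ := (4 / ω * P) ^ (n⁻¹ : ℝ)
  have hR : 0 < R := by positivity
  have hRn : ω * R ^ n = 4 * P := by
    rw [Real.rpow_inv_natCast_pow (by positivity) hn]
    field_simp
  have hRα : R ^ (-α) = (4 / ω) ^ (-(α / n)) * P ^ (-(α / n)) := by
    rw [← Real.rpow_mul (by positivity), ← Real.mul_rpow (by positivity) hP.le]
    ring_nf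
  have hRp : R ^ (-(n + 1 + α)) * R ^ (n + 1) = R ^ (-α) := by
    rw [← Real.rpow_natCast, ← Real.rpow_add hR]
    push_cast
    ring_nf
  calc fracMeanCurvConst n α * P ^ (-(α / n))
      = α / 4 * ω * R ^ (-α) := by rw [fracMeanCurvConst, ← hω, hRα]; ring
    _ = α / 2 * (R ^ (-(n + 1 + α)) * (R ^ (n + 1) * ω - 2 * (R * P))) := by
        rw [← hRp]
        linear_combination -(α / 4) * R ^ (-(n + 1 + α)) * R * hRn
    _ ≤ h := hh.le hα ho hc hfin hx hR.le

end Curvature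

lemma measure_rpow_le_setLIntegral_rpow {X : Type*} [MeasurableSpace X] {μ : Measure X} {A : Set X}
    {f : X → ℝ} {a c q : ℝ} (hc : 0 < c) (hq : 0 ≤ q) (h0 : μ A ≠ 0) (hfin : μ A ≠ ⊤)
    (hf : ∀ᵐ x ∂μ.restrict A, c * μ.real A ^ (-a) ≤ f x) :
    μ A ^ (1 - a * q) ≤
      ENNReal.ofReal (c ^ q)⁻¹ * ∫⁻ x in A, ENNReal.ofReal (f x ^ q) ∂μ := by
  have hP : 0 < μ.real A := ENNReal.toReal_pos h0 hfin
  have hP' : μ A = ENNReal.ofReal (μ.real A) := (ofReal_measureReal hfin).symm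
  have hpow : (c ^ q)⁻¹ * (c * μ.real A ^ (-a)) ^ q * μ.real A = μ.real A ^ (1 - a * q) := by
    rw [Real.mul_rpow hc.le (by positivity), inv_mul_cancel_left₀ (by positivity),
      ← Real.rpow_mul hP.le, ← Real.rpow_add_one hP.ne']
    ring_nf
  calc μ A ^ (1 - a * q)
      = ENNReal.ofReal (c ^ q)⁻¹ * (ENNReal.ofReal ((c * μ.real A ^ (-a)) ^ q) * μ A) := by
        rw [hP', ENNReal.ofReal_rpow_of_pos hP, ← hpow, ENNReal.ofReal_mul (by positivity),
          ENNReal.ofReal_mul (by positivity), mul_assoc]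
    _ = ENNReal.ofReal (c ^ q)⁻¹ *
          ∫⁻ _ in A, ENNReal.ofReal ((c * μ.real A ^ (-a)) ^ q) ∂μ := by rw [setLIntegral_const]
    _ ≤ ENNReal.ofReal (c ^ q)⁻¹ * ∫⁻ x in A, ENNReal.ofReal (f x ^ q) ∂μ := by
        gcongr _ * ?_
        refine lintegral_mono_ae (hf.mono fun x hx => ENNReal.ofReal_le_ofReal ?_)
        exact Real.rpow_le_rpow (by positivity) hx hq

theorem fractional_aleksandrov_fenchel_convex_general (n : ℕ) {α s : ℝ} (hα : 0 < α)
    (hs : 0 ≤ s) (hsn : s < n) :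
    ∃ C : ℝ, 0 < C ∧
      ∀ Ω : Set (EuclideanSpace ℝ (Fin (n + 1))), IsOpen Ω → Convex ℝ Ω →
        μH[(n : ℝ)] (frontier Ω) < ⊤ →
      ∀ H : EuclideanSpace ℝ (Fin (n + 1)) → ℝ,
        (∀ᵐ x ∂(μH[(n : ℝ)].restrict (frontier Ω)), IsFracMeanCurv n α Ω x (H x)) →
        μH[(n : ℝ)] (frontier Ω) ^ ((n - s) / n) ≤
          ENNReal.ofReal C *
            ∫⁻ x in frontier Ω, ENNReal.ofReal (H x ^ (s / α)) ∂μH[(n : ℝ)] := by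
  have hn : (0 : ℝ) < n := hs.trans_lt hsn
  have hc := fracMeanCurvConst_pos n hα
  refine ⟨(fracMeanCurvConst n α ^ (s / α))⁻¹, by positivity, fun Ω ho hconv hfin H hH => ?_⟩
  obtain h0 | h0 := eq_or_ne (μH[(n : ℝ)] (frontier Ω)) 0
  · rw [h0, ENNReal.zero_rpow_of_pos (div_pos (sub_pos.2 hsn) hn)]
    exact zero_le
  have hbound : ∀ᵐ x ∂μH[(n : ℝ)].restrict (frontier Ω),
      fracMeanCurvConst n α * μH[(n : ℝ)].real (frontier Ω) ^ (-(α / n)) ≤ H x := by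
    filter_upwards [hH, ae_restrict_mem isClosed_frontier.measurableSet] with x hHx hx
    rw [ho.frontier_eq] at hx
    exact hHx.const_mul_rpow_le (by exact_mod_cast hn.ne') hα ho hconv h0 hfin.ne hx.2
  have hexp : (n - s) / n = 1 - α / n * (s / α) := by field_simp
  rw [hexp]
  exact measure_rpow_le_setLIntegral_rpow hc (by positivity) h0 hfin.ne hbound

/-- Fractional Aleksandrov-Fenchel type inequality on convex hypersurfaces. -/
theorem fractional_aleksandrov_fenchel_convex
    (n : ℕ) (hn : 1 ≤ n) (α s : ℝ)
    (hα : α ∈ Set.Ioo (0:ℝ) 1) (hs : s ∈ Set.Ioo (0:ℝ) 1) :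
    ∃ C : ℝ, 0 < C ∧
      ∀ (Ω : Set (EuclideanSpace ℝ (Fin (n+1)))), IsOpen Ω → Convex ℝ Ω →
        μH[(n:ℝ)] (frontier Ω) < ⊤ →
      ∀ (Hα : EuclideanSpace ℝ (Fin (n+1)) → ℝ), Measurable Hα →
        (∀ x ∈ frontier Ω, 0 ≤ Hα x) →
        (∀ᵐ x ∂(μH[(n:ℝ)].restrict (frontier Ω)), IsFracMeanCurv n α Ω x (Hα x)) →
        (μH[(n:ℝ)] (frontier Ω)) ^ (((n:ℝ) - s) / (n:ℝ))
          ≤ ENNReal.ofReal C *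
            ∫⁻ x in frontier Ω, ENNReal.ofReal (Hα x ^ (s / α)) ∂μH[(n:ℝ)] := by
  obtain ⟨C, hC, hbound⟩ := fractional_aleksandrov_fenchel_convex_general n hα.1 hs.1.le
    (hs.2.trans_le (by exact_mod_cast hn))
  exact ⟨C, hC, fun Ω ho hc hfin Hα _ _ => hbound Ω ho hc hfin Hα⟩
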